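/- Under Assumption 1, for all distinct i, k ∈ [m]: k belongs to the causal Markov boundary A(i) of X_i if and only if I(X_k → X_i ‖ X_{[m]∖{i,k}}) > 0. Equivalently, the minimal generative model graph (with an edge k → i iff k ∈ A(i)) and the directed information graph (with an edge k → i iff I(X_k → X_i ‖ X_{[m]∖{i,k}}) > 0) are identical. -/

import Mathlib

open Finset

/-- Probability of an event under the probability mass function `p` on a finite space. -/
noncomputable def pr {Ω : Type} [Fintype Ω] (p : Ω → ℝ) (E : Set Ω) : ℝ :=
  ∑ ω : Ω, E.indicator p ω

/-- Shannon conditional mutual information `I(A ; B | C)` of finite-valued random variables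
on a finite probability space with pmf `p` (terms with vanishing probability contribute `0`,
by the conventions `Real.log 0 = 0`, `x / 0 = 0`). -/
noncomputable def cmi {Ω α β γ : Type} [Fintype Ω] [Fintype α] [Fintype β] [Fintype γ]
    (p : Ω → ℝ) (A : Ω → α) (B : Ω → β) (C : Ω → γ) : ℝ :=
  ∑ a : α, ∑ b : β, ∑ c : γ,
    pr p {ω | A ω = a ∧ B ω = b ∧ C ω = c} *
      Real.log (pr p {ω | A ω = a ∧ B ω = b ∧ C ω = c} * pr p {ω | C ω = c} /
        (pr p {ω | A ω = a ∧ C ω = c} * pr p {ω | B ω = b ∧ C ω = c}))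

/-- `A` and `B` are conditionally independent given `C` (under the pmf `p`). -/
def CondIndep {Ω α β γ : Type} [Fintype Ω] (p : Ω → ℝ)
    (A : Ω → α) (B : Ω → β) (C : Ω → γ) : Prop :=
  ∀ (a : α) (b : β) (c : γ),
    pr p {ω | A ω = a ∧ B ω = b ∧ C ω = c} * pr p {ω | C ω = c}
      = pr p {ω | A ω = a ∧ C ω = c} * pr p {ω | B ω = b ∧ C ω = c}

/-- Trajectories of `m` processes over `n` time steps with alphabet `𝒳`:
`ω i j` is the value of process `i` at (0-indexed) time `j`. -/
abbrev Traj (m n : ℕ) (𝒳 : Type) := Fin m → Fin n → 𝒳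

/-- The past `X_S^{j-1}`: the values of the processes in `S` at times strictly before `j`;
all other entries are masked by `none`. -/
def past {m n : ℕ} {𝒳 : Type} (S : Finset (Fin m)) (j : Fin n) (ω : Traj m n 𝒳) :
    Fin m → Fin n → Option 𝒳 :=
  fun k t => if k ∈ S ∧ t < j then some (ω k t) else none

/-- Causally conditioned directed information
`I(X_S → X_i ‖ X_T) := Σ_{j=1}^{n} I(X_S^{j-1} ; X_{i,j} | X_i^{j-1}, X_T^{j-1})`. -/
noncomputable def di {m n : ℕ} {𝒳 : Type} [Fintype 𝒳] [DecidableEq 𝒳]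
    (p : Traj m n 𝒳 → ℝ) (S : Finset (Fin m)) (i : Fin m) (T : Finset (Fin m)) : ℝ :=
  ∑ j : Fin n,
    cmi p (past S j) (fun ω => ω i j) (fun ω => (past {i} j ω, past T j ω))

/-- Assumption 1: the joint distribution is strictly positive (and is a pmf), and at each
time `j` the variables `X_{1,j}, …, X_{m,j}` are mutually conditionally independent given
the full past `X_{[m]}^{j-1}` (stated in the division-free form
`P(joint ∧ past) · P(past)^{m-1} = Π_i P(X_{i,j} = x_i ∧ past)`). -/
def Assumption1 {m n : ℕ} {𝒳 : Type} [Fintype 𝒳] [DecidableEq 𝒳]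
    (p : Traj m n 𝒳 → ℝ) : Prop :=
  (∀ ω, 0 < p ω) ∧ (∑ ω : Traj m n 𝒳, p ω = 1) ∧
    ∀ (j : Fin n) (x : Fin m → 𝒳) (h : Fin m → Fin n → Option 𝒳),
      pr p {ω | (∀ i, ω i j = x i) ∧ past Finset.univ j ω = h} *
          pr p {ω | past Finset.univ j ω = h} ^ (m - 1)
        = ∏ i : Fin m, pr p {ω | ω i j = x i ∧ past Finset.univ j ω = h}

/-- `S ⊆ [m]∖{i}` is a causal Markov blanket of `X_i` if
`I(X_{[m]∖({i}∪S)} → X_i ‖ X_S) = 0`. -/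
def IsCausalBlanket {m n : ℕ} {𝒳 : Type} [Fintype 𝒳] [DecidableEq 𝒳]
    (p : Traj m n 𝒳 → ℝ) (i : Fin m) (S : Finset (Fin m)) : Prop :=
  S ⊆ Finset.univ.erase i ∧ di p (Finset.univ.erase i \ S) i S = 0

/-- A causal Markov boundary `A(i)` of `X_i` is a causal Markov blanket of minimum
cardinality. -/
def IsCausalBoundary {m n : ℕ} {𝒳 : Type} [Fintype 𝒳] [DecidableEq 𝒳]
    (p : Traj m n 𝒳 → ℝ) (i : Fin m) (A : Finset (Fin m)) : Prop :=
  IsCausalBlanket p i A ∧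
    ∀ B : Finset (Fin m), IsCausalBlanket p i B → A.card ≤ B.card

section Probability

variable {Ω : Type} [Fintype Ω] {p : Ω → ℝ}

lemma pr_mono (hp : ∀ ω, 0 ≤ p ω) {E F : Set Ω} (h : E ⊆ F) : pr p E ≤ pr p F :=
  Finset.sum_le_sum fun ω _ => Set.indicator_le_indicator_of_subset h hp ω

lemma pr_nonneg (hp : ∀ ω, 0 ≤ p ω) (E : Set Ω) : 0 ≤ pr p E :=
  Finset.sum_nonneg fun ω _ => Set.indicator_nonneg (fun ω _ => hp ω) ω

lemma pr_empty : pr p ∅ = 0 := by simp [pr]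

lemma pr_pos (hp : ∀ ω, 0 < p ω) {E : Set Ω} {ω : Ω} (h : ω ∈ E) : 0 < pr p E := by
  refine Finset.sum_pos' (fun ω _ => Set.indicator_nonneg (fun ω _ => (hp ω).le) ω)
    ⟨ω, Finset.mem_univ _, ?_⟩
  rw [Set.indicator_of_mem h]
  exact hp ω

/-- Law of total probability. -/
lemma sum_pr_eq {α : Type} [Fintype α] (A : Ω → α) (E : Ω → Prop) :
    ∑ a, pr p {ω | A ω = a ∧ E ω} = pr p {ω | E ω} := by
  classical
  unfold pr
  rw [Finset.sum_comm]
  refine Finset.sum_congr rfl fun ω _ => ?_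
  by_cases h : E ω <;> simp [Set.indicator_apply, h]

/-- The summand of conditional mutual information dominates the difference of the joint
probability and the product of conditionals, with equality only under independence. -/
lemma mul_log_ratio_bound {P Q S R : ℝ} (hP : 0 ≤ P) (hPQ : P ≤ Q) (hPS : P ≤ S) (hQR : Q ≤ R) :
    P - Q * S / R ≤ P * Real.log (P * R / (Q * S)) ∧
      (P - Q * S / R = P * Real.log (P * R / (Q * S)) → P * R = Q * S) := by
  rcases hP.eq_or_lt with rfl | hP
  · have h : 0 ≤ Q * S / R := div_nonneg (mul_nonneg hPQ hPS) (hPQ.trans hQR)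
    refine ⟨by simpa using h, fun h0 => ?_⟩
    rcases (hPQ.trans hQR).eq_or_lt with hR | hR
    · have : Q = 0 := by linarith
      simp [this]
    · simp at h0
      rcases h0 with (h0 | h0) | h0
      · simp [h0]
      · simp [h0]
      · exact absurd h0 hR.ne'
  · have hQ := hP.trans_le hPQ
    have hS := hP.trans_le hPS
    have hR := hQ.trans_le hQR
    have hy : 0 < Q * S / (P * R) := by positivity
    have hlog : Real.log (P * R / (Q * S)) = - Real.log (Q * S / (P * R)) := by
      rw [← Real.log_inv, inv_div]
    have hmul : Q * S / R = P * (Q * S / (P * R)) := by field_simp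
    rw [hlog, hmul]
    constructor
    · nlinarith [Real.log_le_sub_one_of_pos hy]
    · intro h
      by_contra hne
      have hy1 : Q * S / (P * R) ≠ 1 := fun h1 =>
        hne ((div_eq_one_iff_eq (by positivity)).1 h1).symm
      nlinarith [Real.log_lt_sub_one_of_pos hy hy1]

lemma log_ratio_eq_zero {x y : ℝ} (h : x = y) : Real.log (x / y) = 0 := by
  subst h
  by_cases hx : x = 0 <;> simp [hx]

lemma cmi_term_bound {α β γ : Type} (hp : ∀ ω, 0 ≤ p ω) (A : Ω → α) (B : Ω → β) (C : Ω → γ)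
    (a : α) (b : β) (c : γ) :
    pr p {ω | A ω = a ∧ B ω = b ∧ C ω = c} -
        pr p {ω | A ω = a ∧ C ω = c} * pr p {ω | B ω = b ∧ C ω = c} / pr p {ω | C ω = c} ≤
      pr p {ω | A ω = a ∧ B ω = b ∧ C ω = c} *
        Real.log (pr p {ω | A ω = a ∧ B ω = b ∧ C ω = c} * pr p {ω | C ω = c} /
          (pr p {ω | A ω = a ∧ C ω = c} * pr p {ω | B ω = b ∧ C ω = c})) ∧
    (pr p {ω | A ω = a ∧ B ω = b ∧ C ω = c} -
        pr p {ω | A ω = a ∧ C ω = c} * pr p {ω | B ω = b ∧ C ω = c} / pr p {ω | C ω = c} =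
      pr p {ω | A ω = a ∧ B ω = b ∧ C ω = c} *
        Real.log (pr p {ω | A ω = a ∧ B ω = b ∧ C ω = c} * pr p {ω | C ω = c} /
          (pr p {ω | A ω = a ∧ C ω = c} * pr p {ω | B ω = b ∧ C ω = c})) →
      pr p {ω | A ω = a ∧ B ω = b ∧ C ω = c} * pr p {ω | C ω = c} =
        pr p {ω | A ω = a ∧ C ω = c} * pr p {ω | B ω = b ∧ C ω = c}) :=
  mul_log_ratio_bound (pr_nonneg hp {ω | A ω = a ∧ B ω = b ∧ C ω = c})
    (pr_mono hp (F := {ω | A ω = a ∧ C ω = c}) fun _ h => ⟨h.1, h.2.2⟩)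
    (pr_mono hp (F := {ω | B ω = b ∧ C ω = c}) fun _ h => h.2)
    (pr_mono hp (F := {ω | C ω = c}) fun _ h => h.2)

variable {α β γ : Type} [Fintype α]

/-- Under a strictly positive pmf, `A` and `B` are conditionally independent given `C` iff the
conditional law of `B` given `(A, C)` depends on the value of `C` only. -/
lemma condIndep_iff (hp : ∀ ω, 0 < p ω) (A : Ω → α) (B : Ω → β) (C : Ω → γ) :
    CondIndep p A B C ↔ ∀ b ω₁ ω₂, C ω₁ = C ω₂ →
      pr p {ω | A ω = A ω₁ ∧ B ω = b ∧ C ω = C ω₁} / pr p {ω | A ω = A ω₁ ∧ C ω = C ω₁} =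
      pr p {ω | A ω = A ω₂ ∧ B ω = b ∧ C ω = C ω₂} / pr p {ω | A ω = A ω₂ ∧ C ω = C ω₂} := by
  have hpos : ∀ ω₀, 0 < pr p {ω | A ω = A ω₀ ∧ C ω = C ω₀} := fun ω₀ =>
    pr_pos hp (ω := ω₀) ⟨rfl, rfl⟩
  constructor
  · intro h b ω₁ ω₂ hC
    have key : ∀ ω₀, pr p {ω | A ω = A ω₀ ∧ B ω = b ∧ C ω = C ω₀} /
        pr p {ω | A ω = A ω₀ ∧ C ω = C ω₀} =
        pr p {ω | B ω = b ∧ C ω = C ω₀} / pr p {ω | C ω = C ω₀} := fun ω₀ => by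
      rw [div_eq_div_iff (hpos ω₀).ne'
        (pr_pos hp (E := {ω | C ω = C ω₀}) (ω := ω₀) rfl).ne', h, mul_comm]
    rw [key, key, hC]
  · intro h a b c
    by_cases hac : ∃ ω₀, A ω₀ = a ∧ C ω₀ = c
    · obtain ⟨ω₀, rfl, rfl⟩ := hac
      set r := pr p {ω | A ω = A ω₀ ∧ B ω = b ∧ C ω = C ω₀} /
        pr p {ω | A ω = A ω₀ ∧ C ω = C ω₀} with hr
      have hjoint : ∀ a, pr p {ω | A ω = a ∧ B ω = b ∧ C ω = C ω₀} =
          r * pr p {ω | A ω = a ∧ C ω = C ω₀} := by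
        intro a
        by_cases ha : ∃ ω₁, A ω₁ = a ∧ C ω₁ = C ω₀
        · obtain ⟨ω₁, rfl, hC⟩ := ha
          rw [hr, ← h b ω₁ ω₀ hC, hC, div_mul_cancel₀]
          exact hC ▸ (hpos ω₁).ne'
        · push Not at ha
          have h1 : {ω | A ω = a ∧ B ω = b ∧ C ω = C ω₀} = ∅ :=
            Set.eq_empty_of_forall_notMem fun ω hω => ha ω hω.1 hω.2.2
          have h2 : {ω | A ω = a ∧ C ω = C ω₀} = ∅ :=
            Set.eq_empty_of_forall_notMem fun ω hω => ha ω hω.1 hω.2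
          rw [h1, h2, pr_empty, mul_zero]
      have hmarg : pr p {ω | B ω = b ∧ C ω = C ω₀} = r * pr p {ω | C ω = C ω₀} := by
        rw [← sum_pr_eq A, ← sum_pr_eq A (fun ω => C ω = C ω₀), Finset.mul_sum]
        exact Finset.sum_congr rfl fun a _ => hjoint a
      rw [hjoint, hmarg]
      ring
    · push Not at hac
      have h1 : {ω | A ω = a ∧ B ω = b ∧ C ω = c} = ∅ :=
        Set.eq_empty_of_forall_notMem fun ω hω => hac ω hω.1 hω.2.2
      have h2 : {ω | A ω = a ∧ C ω = c} = ∅ :=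
        Set.eq_empty_of_forall_notMem fun ω hω => hac ω hω.1 hω.2
      rw [h1, h2, pr_empty, zero_mul, zero_mul]

variable [Fintype β] [Fintype γ]

lemma sum_sub_condProd_eq_zero (A : Ω → α) (B : Ω → β) (C : Ω → γ) :
    ∑ a : α, ∑ b : β, ∑ c : γ, (pr p {ω | A ω = a ∧ B ω = b ∧ C ω = c} -
      pr p {ω | A ω = a ∧ C ω = c} * pr p {ω | B ω = b ∧ C ω = c} / pr p {ω | C ω = c}) = 0 := by
  simp only [Finset.sum_sub_distrib]
  rw [sub_eq_zero]
  have hjoint : ∑ a : α, ∑ b : β, ∑ c : γ, pr p {ω | A ω = a ∧ B ω = b ∧ C ω = c}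
      = ∑ c, pr p {ω | C ω = c} := by
    rw [Finset.sum_comm]
    simp_rw [Finset.sum_comm (s := (Finset.univ : Finset α)), sum_pr_eq A]
    rw [Finset.sum_comm]
    simp_rw [sum_pr_eq B]
  have hprod : ∑ a : α, ∑ b : β, ∑ c : γ, pr p {ω | A ω = a ∧ C ω = c} *
      pr p {ω | B ω = b ∧ C ω = c} / pr p {ω | C ω = c} = ∑ c, pr p {ω | C ω = c} := by
    simp_rw [Finset.sum_comm (s := (Finset.univ : Finset β)) (t := (Finset.univ : Finset γ)),
      ← Finset.sum_div, ← Finset.mul_sum, sum_pr_eq B]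
    rw [Finset.sum_comm]
    simp_rw [← Finset.sum_div, ← Finset.sum_mul, sum_pr_eq A]
    refine Finset.sum_congr rfl fun c _ => ?_
    rw [mul_self_div_self]
  rw [hjoint, hprod]

lemma cmi_nonneg (hp : ∀ ω, 0 ≤ p ω) (A : Ω → α) (B : Ω → β) (C : Ω → γ) :
    0 ≤ cmi p A B C := by
  rw [← sum_sub_condProd_eq_zero A B C]
  exact Finset.sum_le_sum fun a _ => Finset.sum_le_sum fun b _ => Finset.sum_le_sum fun c _ =>
    (cmi_term_bound hp A B C a b c).1

lemma cmi_eq_zero_iff (hp : ∀ ω, 0 ≤ p ω) (A : Ω → α) (B : Ω → β) (C : Ω → γ) :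
    cmi p A B C = 0 ↔ CondIndep p A B C := by
  constructor
  · intro h a b c
    rw [← sum_sub_condProd_eq_zero A B C, eq_comm] at h
    have hle := fun a b c => (cmi_term_bound hp A B C a b c).1
    have ha := (Finset.sum_eq_sum_iff_of_le fun a _ => Finset.sum_le_sum fun b _ =>
      Finset.sum_le_sum fun c _ => hle a b c).1 h a (Finset.mem_univ _)
    have hb := (Finset.sum_eq_sum_iff_of_le fun b _ =>
      Finset.sum_le_sum fun c _ => hle a b c).1 ha b (Finset.mem_univ _)
    exact (cmi_term_bound hp A B C a b c).2
      ((Finset.sum_eq_sum_iff_of_le fun c _ => hle a b c).1 hb c (Finset.mem_univ _))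
  · intro h
    refine Finset.sum_eq_zero fun a _ => Finset.sum_eq_zero fun b _ =>
      Finset.sum_eq_zero fun c _ => ?_
    rw [log_ratio_eq_zero (h a b c), mul_zero]

end Probability

section DirectedInformation

variable {m n : ℕ} {𝒳 : Type}

lemma past_eq_past_iff {S : Finset (Fin m)} {j : Fin n} {ω ω' : Traj m n 𝒳} :
    past S j ω = past S j ω' ↔ ∀ l ∈ S, ∀ t < j, ω l t = ω' l t := by
  constructor
  · intro h l hl t ht
    simpa [past, hl, ht] using congrFun (congrFun h l) t
  · intro h
    funext l t
    by_cases hlt : l ∈ S ∧ t < j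
    · simp [past, hlt, h l hlt.1 t hlt.2]
    · simp [past, hlt]

lemma past_cover_iff {i : Fin m} {T : Finset (Fin m)} {j : Fin n} {ω ω' : Traj m n 𝒳} :
    past Finset.univ j ω = past Finset.univ j ω' ↔
      past (Finset.univ.erase i \ T) j ω = past (Finset.univ.erase i \ T) j ω' ∧
        (past {i} j ω, past T j ω) = (past {i} j ω', past T j ω') := by
  simp only [Prod.mk.injEq, past_eq_past_iff]
  constructor
  · intro h
    exact ⟨fun l _ => h l (Finset.mem_univ _), fun l _ => h l (Finset.mem_univ _),
      fun l _ => h l (Finset.mem_univ _)⟩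
  · rintro ⟨h1, h2, h3⟩ l -
    by_cases hT : l ∈ T
    · exact h3 l hT
    by_cases hi : l = i
    · exact h2 l (by simp [hi])
    · exact h1 l (by simp [hi, hT])

variable [Fintype 𝒳] {p : Traj m n 𝒳 → ℝ}

/-- Conditional probability that `X_{i,j} = b` given that the full past up to time `j` is
that of `ω`. -/
noncomputable def nextProb (p : Traj m n 𝒳 → ℝ) (i : Fin m) (j : Fin n) (b : 𝒳)
    (ω : Traj m n 𝒳) : ℝ :=
  pr p {ω' | ω' i j = b ∧ past Finset.univ j ω' = past Finset.univ j ω} /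
    pr p {ω' | past Finset.univ j ω' = past Finset.univ j ω}

/-- The conditional law of each `X_{i,j}` given the full past depends only on the pasts of `X_i`
and `X_T`. -/
def DependsOnPast (p : Traj m n 𝒳 → ℝ) (i : Fin m) (T : Finset (Fin m)) : Prop :=
  ∀ (j : Fin n) (b : 𝒳) (ω₁ ω₂ : Traj m n 𝒳),
    (∀ l ∈ insert i T, ∀ t < j, ω₁ l t = ω₂ l t) → nextProb p i j b ω₁ = nextProb p i j b ω₂

lemma DependsOnPast.mono {i : Fin m} {T U : Finset (Fin m)} (h : DependsOnPast p i T)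
    (hTU : T ⊆ U) : DependsOnPast p i U := fun j b ω₁ ω₂ hω =>
  h j b ω₁ ω₂ fun l hl => hω l (Finset.insert_subset_insert i hTU hl)

lemma DependsOnPast.inter {i : Fin m} {T U : Finset (Fin m)} (hT : DependsOnPast p i T)
    (hU : DependsOnPast p i U) : DependsOnPast p i (T ∩ U) := by
  intro j b ω₁ ω₂ hω
  let ω₃ : Traj m n 𝒳 := fun l => if l ∈ insert i T then ω₁ l else ω₂ l
  refine (hT j b ω₁ ω₃ fun l hl t _ => by simp only [ω₃, if_pos hl]).trans
    (hU j b ω₃ ω₂ fun l hl t ht => ?_)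
  by_cases hlT : l ∈ insert i T
  · simp only [ω₃, if_pos hlT]
    refine hω l ?_ t ht
    rw [Finset.insert_inter_distrib]
    exact Finset.mem_inter.2 ⟨hlT, hl⟩
  · simp only [ω₃, if_neg hlT]

variable [DecidableEq 𝒳]

lemma di_nonneg (hp : ∀ ω, 0 ≤ p ω) (S : Finset (Fin m)) (i : Fin m) (T : Finset (Fin m)) :
    0 ≤ di p S i T :=
  Finset.sum_nonneg fun _ _ => cmi_nonneg hp _ _ _

lemma di_compl_eq_zero_iff (hp : ∀ ω, 0 < p ω) (i : Fin m) (T : Finset (Fin m)) :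
    di p (Finset.univ.erase i \ T) i T = 0 ↔ DependsOnPast p i T := by
  have hp' : ∀ ω, 0 ≤ p ω := fun ω => (hp ω).le
  unfold di
  rw [Finset.sum_eq_zero_iff_of_nonneg fun j _ => cmi_nonneg hp' _ _ _]
  simp only [Finset.mem_univ, true_imp_iff, cmi_eq_zero_iff hp', condIndep_iff hp]
  refine forall_congr' fun j => forall_congr' fun b => forall_congr' fun ω₁ =>
    forall_congr' fun ω₂ => ?_
  have hC : (past {i} j ω₁, past T j ω₁) = (past {i} j ω₂, past T j ω₂) ↔
      ∀ l ∈ insert i T, ∀ t < j, ω₁ l t = ω₂ l t := by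
    simp [past_eq_past_iff]
  rw [hC]
  simp only [nextProb, past_cover_iff (i := i) (T := T), and_left_comm]

end DirectedInformation

/-- equivalence of the minimal generative model graph and the directed
information graph. Under Assumption 1, for distinct `i, k`: `k` belongs to the causal
Markov boundary `A(i)` of `X_i` iff `I(X_k → X_i ‖ X_{[m]∖{i,k}}) > 0`. -/
theorem stmt_8 {m n : ℕ} (hm : 2 ≤ m) (hn : 1 ≤ n)
    {𝒳 : Type} [Fintype 𝒳] [DecidableEq 𝒳] [Nonempty 𝒳]
    (p : Traj m n 𝒳 → ℝ) (hp : Assumption1 p)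
    (i k : Fin m) (hik : k ≠ i)
    (A : Finset (Fin m)) (hA : IsCausalBoundary p i A) :
    k ∈ A ↔ 0 < di p {k} i ((Finset.univ.erase i).erase k) := by
  have hpos := hp.1
  have hset : Finset.univ.erase i \ (Finset.univ.erase i).erase k = {k} := by
    ext l
    by_cases h : l = k <;> simp [h, hik]
  have hzero := di_compl_eq_zero_iff hpos i ((Finset.univ.erase i).erase k)
  rw [hset] at hzero
  have hAdep := (di_compl_eq_zero_iff hpos i A).1 hA.1.2
  rw [(di_nonneg (fun ω => (hpos ω).le) _ _ _).lt_iff_ne', ne_eq, hzero]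
  constructor
  · intro hkA hdep
    have hinter : A ∩ (Finset.univ.erase i).erase k = A.erase k := by
      rw [Finset.inter_erase, Finset.inter_eq_left.2 hA.1.1]
    have hblanket : IsCausalBlanket p i (A.erase k) :=
      ⟨(Finset.erase_subset k A).trans hA.1.1,
        (di_compl_eq_zero_iff hpos i _).2 (hinter ▸ hAdep.inter hdep)⟩
    exact (Finset.card_erase_lt_of_mem hkA).not_ge (hA.2 _ hblanket)
  · intro hdep
    by_contra hkA
    exact hdep (hAdep.mono (Finset.subset_erase.2 ⟨hA.1.1, hkA⟩))
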